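/- arXiv:2001.03064 — 3 statements merged into one kernel-verified Lean document; each statement's English description precedes it below -/
import Mathlib

section
/- Let a, a₁, ã, a_j > 0 and κ, κ₁, κ̃ ≥ 0 with κ + κ₁ + κ̃ = 1. Suppose that for every t > 0 the following holds: if X ~ Gamma(at, a), Y ~ Gamma(a₁t, a₁) and Z ~ Gamma(ãt, ã) are independent random variables, then κX + κ₁Y + κ̃Z has the Gamma(a_j t, a_j) distribution. Then a_j = a·1_{κ>0} + a₁·1_{κ₁>0} + ã·1_{κ̃>0}; moreover κ·a_j = a whenever κ > 0, κ₁·a_j = a₁ whenever κ₁ > 0, and κ̃·a_j = ã whenever κ̃ > 0. -/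
open MeasureTheory ProbabilityTheory

/-! A linear combination `∑ κᵢ Xᵢ` of independent `Xᵢ ~ Gamma(αᵢ, ρᵢ)` has log-Laplace transform
`-∑ αᵢ log (1 - xᵢ s)` near `0`, with `xᵢ = κᵢ / ρᵢ`. If it is distributed as `Gamma(β, r)`,
comparing cumulants with those of `-β log (1 - y s)`, `y = 1 / r`, gives `∑ αᵢ xᵢⁿ = β yⁿ` for all
`n ≥ 1`. Hence `∑ αᵢ xᵢ² (xᵢ - y)² = 0`, so every `xᵢ` is `0` or `y`, and the case `n = 1` says that
the `αᵢ` with `xᵢ = y` add up to `β`. -/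

section PowerSums

open Filter Topology

variable {ι : Type*} [Fintype ι]

section OrderedField

variable {𝕜 : Type*} [Field 𝕜] [LinearOrder 𝕜] [IsStrictOrderedRing 𝕜] {c x : ι → 𝕜} {b y : 𝕜}

lemma eq_zero_or_eq_of_sum_mul_pow_eq (hc : ∀ i, 0 < c i)
    (h : ∀ n ≠ 0, ∑ i, c i * x i ^ n = b * y ^ n) (i : ι) : x i = 0 ∨ x i = y := by
  have sum_sq_eq_zero : ∑ i, c i * (x i * (x i - y)) ^ 2 = 0 := calc
    _ = ∑ i, c i * x i ^ 4 - 2 * y * ∑ i, c i * x i ^ 3 + y ^ 2 * ∑ i, c i * x i ^ 2 := by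
      simp only [Finset.mul_sum, ← Finset.sum_sub_distrib, ← Finset.sum_add_distrib]
      exact Finset.sum_congr rfl fun i _ ↦ by ring
    _ = 0 := by
      rw [h 4 four_ne_zero, h 3 three_ne_zero, h 2 two_ne_zero]
      ring
  have term_eq_zero : c i * (x i * (x i - y)) ^ 2 = 0 :=
    (Finset.sum_eq_zero_iff_of_nonneg fun j _ ↦ mul_nonneg (hc j).le (sq_nonneg _)).1
      sum_sq_eq_zero i (Finset.mem_univ i)
  simpa [(hc i).ne', sub_eq_zero] using term_eq_zero

lemma sum_filter_ne_zero_eq_of_sum_mul_pow_eq (hc : ∀ i, 0 < c i) (hy : y ≠ 0)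
    (h : ∀ n ≠ 0, ∑ i, c i * x i ^ n = b * y ^ n) : ∑ i with x i ≠ 0, c i = b := by
  refine mul_right_cancel₀ hy ?_
  calc (∑ i with x i ≠ 0, c i) * y
    _ = ∑ i with x i ≠ 0, c i * x i := by
      rw [Finset.sum_mul]
      refine Finset.sum_congr rfl fun i hi ↦ ?_
      rw [(eq_zero_or_eq_of_sum_mul_pow_eq hc h i).resolve_left (Finset.mem_filter.1 hi).2]
    _ = ∑ i, c i * x i := Finset.sum_filter_of_ne fun _ _ ↦ right_ne_zero_of_mul
    _ = b * y := by simpa only [pow_one] using h 1 one_ne_zero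

end OrderedField

-- At `n = 0` the division by zero gives the constant coefficient `0`.
lemma hasFPowerSeriesAt_log_one_sub_mul (x : ℝ) :
    HasFPowerSeriesAt (fun s ↦ Real.log (1 - x * s)) (.ofScalars ℝ fun n ↦ -(x ^ n / n)) 0 := by
  rw [hasFPowerSeriesAt_iff]
  have small : ∀ᶠ s in 𝓝 (0 : ℝ), |x * s| < 1 :=
    ContinuousAt.eventually_lt (by fun_prop) continuousAt_const (by simp)
  filter_upwards [small] with s hs
  rw [← hasSum_nat_add_iff' 1]
  simpa [mul_pow, mul_div_assoc, mul_div_left_comm] using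
    (Real.hasSum_pow_div_log_of_abs_lt_one hs).neg

lemma hasFPowerSeriesAt_sum_mul_log_one_sub_mul (c x : ι → ℝ) :
    HasFPowerSeriesAt (fun s ↦ ∑ i, c i * Real.log (1 - x i * s))
      (.ofScalars ℝ fun n ↦ -((∑ i, c i * x i ^ n) / n)) 0 := by
  rw [hasFPowerSeriesAt_iff]
  filter_upwards [eventually_all.2 fun i ↦
    hasFPowerSeriesAt_iff.1 (hasFPowerSeriesAt_log_one_sub_mul (x i))] with s hs
  convert! hasSum_sum fun i (_ : i ∈ Finset.univ) ↦ (hs i).mul_left (c i) using 2 with n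
  simp only [FormalMultilinearSeries.coeff_ofScalars, smul_eq_mul, Finset.sum_div, Finset.mul_sum,
    ← Finset.sum_neg_distrib]
  exact Finset.sum_congr rfl fun i _ ↦ by ring

lemma sum_mul_pow_eq_of_sum_mul_log_eventuallyEq {c x : ι → ℝ} {b y : ℝ}
    (h : (fun s ↦ ∑ i, c i * Real.log (1 - x i * s)) =ᶠ[𝓝 0] fun s ↦ b * Real.log (1 - y * s))
    {n : ℕ} (hn : n ≠ 0) : ∑ i, c i * x i ^ n = b * y ^ n := by
  have single := hasFPowerSeriesAt_sum_mul_log_one_sub_mul (fun _ : Unit ↦ b) (fun _ ↦ y)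
  simp only [Finset.univ_unique, Finset.sum_singleton] at single
  have coeff_eq := congrFun (FormalMultilinearSeries.ofScalars_series_injective ℝ ℝ
    ((hasFPowerSeriesAt_sum_mul_log_one_sub_mul c x).eq_formalMultilinearSeries_of_eventually
      single h)) n
  simpa [div_left_inj' (Nat.cast_ne_zero (R := ℝ).2 hn)] using coeff_eq

end PowerSums

section Gamma

open Filter Topology

variable {Ω : Type*} {mΩ : MeasurableSpace Ω} {μ : Measure Ω}

lemma gammaPDFReal_mul_exp {a r t x : ℝ} (hr : 0 < r) (ht : t < r) :
    gammaPDFReal a r x * Real.exp (t * x) = (1 - t / r) ^ (-a) * gammaPDFReal a (r - t) x := by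
  have rpow_eq : r ^ a = (1 - t / r) ^ (-a) * (r - t) ^ a := by
    have : 0 < r - t := sub_pos.2 ht
    rw [one_sub_div hr.ne', Real.rpow_neg (by positivity), Real.div_rpow this.le hr.le]
    field_simp
  unfold gammaPDFReal
  split_ifs
  · rw [rpow_eq, show -((r - t) * x) = -(r * x) + t * x by ring, Real.exp_add]
    ring
  · simp

lemma mgf_id_gammaMeasure {a r t : ℝ} (ha : 0 < a) (hr : 0 < r) (ht : t < r) :
    mgf id (gammaMeasure a r) t = (1 - t / r) ^ (-a) := by
  have hrt : 0 < r - t := sub_pos.2 ht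
  have integral_pdf : ∫ x, gammaPDFReal a (r - t) x = 1 := by
    rw [integral_eq_lintegral_of_nonneg_ae (ae_of_all _ (gammaPDFReal_nonneg ha hrt)) (by fun_prop)]
    exact (ENNReal.toReal_eq_one_iff _).2 (lintegral_gammaPDF_eq_one ha hrt)
  calc mgf id (gammaMeasure a r) t
    _ = ∫ x, gammaPDFReal a r x * Real.exp (t * x) := by
      have meas : Measurable (gammaPDF a r) := (measurable_gammaPDFReal a r).ennreal_ofReal
      rw [mgf, gammaMeasure, integral_withDensity_eq_integral_toReal_smul meas (by simp [gammaPDF])]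
      simp [gammaPDF, gammaPDFReal_nonneg ha hr]
    _ = (1 - t / r) ^ (-a) := by
      simp only [gammaPDFReal_mul_exp hr ht, integral_const_mul, integral_pdf, mul_one]

lemma mgf_const_mul_of_hasLaw_gammaMeasure {X : Ω → ℝ} {a r : ℝ} (ha : 0 < a) (hr : 0 < r)
    (hX : HasLaw X (gammaMeasure a r) μ) {c s : ℝ} (hs : 0 < 1 - c / r * s) :
    mgf (fun ω ↦ c * X ω) μ s = (1 - c / r * s) ^ (-a) := by
  have hcs : c * s / r = c / r * s := by ring
  rw [mgf_const_mul, ← mgf_id_map hX.aemeasurable, hX.map_eq, mgf_id_gammaMeasure ha hr, hcs]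
  rwa [← div_lt_one hr, hcs, ← sub_pos]

variable {ι : Type*} [Fintype ι] {X : ι → Ω → ℝ} {α ρ κ : ι → ℝ} {β r : ℝ}

lemma sum_mul_log_eventuallyEq_of_hasLaw_gammaMeasure
    (hα : ∀ i, 0 < α i) (hρ : ∀ i, 0 < ρ i) (hβ : 0 < β) (hr : 0 < r)
    (hX : ∀ i, HasLaw (X i) (gammaMeasure (α i) (ρ i)) μ) (hindep : iIndepFun X μ)
    (hsum : HasLaw (fun ω ↦ ∑ i, κ i * X i ω) (gammaMeasure β r) μ) :
    (fun s ↦ ∑ i, α i * Real.log (1 - κ i / ρ i * s)) =ᶠ[𝓝 0]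
      fun s ↦ β * Real.log (1 - 1 / r * s) := by
  have pos_near_zero (x : ℝ) : ∀ᶠ s in 𝓝 (0 : ℝ), 0 < 1 - x * s :=
    continuousAt_const.eventually_lt (by fun_prop) (by simp)
  filter_upwards [eventually_all.2 fun i ↦ pos_near_zero (κ i / ρ i), pos_near_zero (1 / r)]
    with s hs hs'
  have mgf_eq : ∏ i, (1 - κ i / ρ i * s) ^ (-α i) = (1 - 1 / r * s) ^ (-β) := calc
    _ = ∏ i, mgf (fun ω ↦ κ i * X i ω) μ s := Finset.prod_congr rfl fun i _ ↦
      (mgf_const_mul_of_hasLaw_gammaMeasure (hα i) (hρ i) (hX i) (hs i)).symm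
    _ = mgf (fun ω ↦ ∑ i, κ i * X i ω) μ s := by
      have indep_mul : iIndepFun (fun i ω ↦ κ i * X i ω) μ :=
        hindep.comp (fun i x ↦ κ i * x) fun i ↦ by fun_prop
      rw [← indep_mul.mgf_sum₀ (fun i ↦ (hX i).aemeasurable.const_mul (κ i)), Finset.sum_fn]
    _ = (1 - 1 / r * s) ^ (-β) := by
      simpa only [one_mul] using mgf_const_mul_of_hasLaw_gammaMeasure (c := 1) hβ hr hsum hs'
  have log_eq := congrArg Real.log mgf_eq
  rw [Real.log_prod fun i _ ↦ (Real.rpow_pos_of_pos (hs i) _).ne'] at log_eq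
  simpa [Real.log_rpow, hs, hs', -one_div] using log_eq

theorem gamma_decomposition_parameters_general
    (hα : ∀ i, 0 < α i) (hρ : ∀ i, 0 < ρ i) (hβ : 0 < β) (hr : 0 < r)
    (h : (Measure.pi fun i ↦ gammaMeasure (α i) (ρ i)).map (fun x ↦ ∑ i, κ i * x i) =
      gammaMeasure β r) :
    β = ∑ i with κ i ≠ 0, α i ∧ ∀ i, κ i ≠ 0 → κ i * r = ρ i := by
  have (i : ι) : IsProbabilityMeasure (gammaMeasure (α i) (ρ i)) :=
    isProbabilityMeasure_gammaMeasure (hα i) (hρ i)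
  have law_coord (i : ι) : HasLaw (fun x : ι → ℝ ↦ x i) (gammaMeasure (α i) (ρ i))
      (Measure.pi fun i ↦ gammaMeasure (α i) (ρ i)) :=
    (measurePreserving_eval (fun i ↦ gammaMeasure (α i) (ρ i)) i).hasLaw
  have indep_coord : iIndepFun (fun i (x : ι → ℝ) ↦ x i)
      (Measure.pi fun i ↦ gammaMeasure (α i) (ρ i)) := iIndepFun_pi fun _ ↦ aemeasurable_id
  have log_laplace_eq := sum_mul_log_eventuallyEq_of_hasLaw_gammaMeasure hα hρ hβ hr law_coord
    indep_coord ⟨Measurable.aemeasurable (by fun_prop), h⟩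
  have sum_pow_eq : ∀ n ≠ 0, ∑ i, α i * (κ i / ρ i) ^ n = β * (1 / r) ^ n := fun n hn ↦
    sum_mul_pow_eq_of_sum_mul_log_eventuallyEq log_laplace_eq hn
  refine ⟨?_, fun i hi ↦ ?_⟩
  · simpa [(hρ _).ne'] using
      (sum_filter_ne_zero_eq_of_sum_mul_pow_eq hα (one_div_pos.2 hr).ne' sum_pow_eq).symm
  · have ratio_eq : κ i / ρ i = 1 / r :=
      (eq_zero_or_eq_of_sum_mul_pow_eq hα sum_pow_eq i).resolve_left (div_ne_zero hi (hρ i).ne')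
    simpa using (div_eq_div_iff (hρ i).ne' hr.ne').1 ratio_eq

end Gamma

lemma measurable_vec_prod_prod {E : Type*} [MeasurableSpace E] :
    Measurable fun p : E × E × E ↦ ![p.1, p.2.1, p.2.2] := by
  rw [measurable_pi_iff, Fin.forall_fin_succ, Fin.forall_fin_two]
  exact ⟨measurable_fst, measurable_snd.fst, measurable_snd.snd⟩

lemma measurePreserving_vec_prod_prod {E : Type*} [MeasurableSpace E] (μ : Fin 3 → Measure E)
    [∀ i, SigmaFinite (μ i)] :
    MeasurePreserving (fun p : E × E × E ↦ ![p.1, p.2.1, p.2.2])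
      ((μ 0).prod ((μ 1).prod (μ 2))) (Measure.pi μ) := by
  refine ⟨measurable_vec_prod_prod, (Measure.pi_eq fun s hs ↦ ?_).symm⟩
  have preimage_box : (fun p : E × E × E ↦ ![p.1, p.2.1, p.2.2]) ⁻¹' Set.univ.pi s =
      s 0 ×ˢ s 1 ×ˢ s 2 := by
    ext p
    simp [Fin.forall_fin_succ]
  rw [Measure.map_apply measurable_vec_prod_prod (.univ_pi hs), preimage_box, Measure.prod_prod,
    Measure.prod_prod, Fin.prod_univ_three, mul_assoc]

lemma map_sum_mul_pi_fin_three (μ : Fin 3 → Measure ℝ) [∀ i, SigmaFinite (μ i)] (c : Fin 3 → ℝ) :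
    (Measure.pi μ).map (fun x ↦ ∑ i, c i * x i) =
      ((μ 0).prod ((μ 1).prod (μ 2))).map fun p ↦ c 0 * p.1 + c 1 * p.2.1 + c 2 * p.2.2 := by
  rw [← (measurePreserving_vec_prod_prod μ).map_eq,
    Measure.map_map (by fun_prop) measurable_vec_prod_prod]
  simp [Function.comp_def, Fin.sum_univ_three]

/-- the parameter identities (idgp1)–(idgp2). If for every `t > 0` the sum
`κX + κ₁Y + κ̃Z` of independent `X ~ Gamma(at, a)`, `Y ~ Gamma(a₁t, a₁)`, `Z ~ Gamma(ãt, ã)`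
has the `Gamma(aⱼt, aⱼ)` distribution, where `κ, κ₁, κ̃ ≥ 0` sum to `1`, then
`aⱼ = a·1_{κ>0} + a₁·1_{κ₁>0} + ã·1_{κ̃>0}` and `κ·aⱼ = a` whenever `κ > 0`,
`κ₁·aⱼ = a₁` whenever `κ₁ > 0`, `κ̃·aⱼ = ã` whenever `κ̃ > 0`. -/
theorem gamma_decomposition_parameters
    (a a₁ atil aj κ κ₁ κtil : ℝ)
    (ha : 0 < a) (ha₁ : 0 < a₁) (hatil : 0 < atil) (haj : 0 < aj)
    (hκ : 0 ≤ κ) (hκ₁ : 0 ≤ κ₁) (hκtil : 0 ≤ κtil) (hsum : κ + κ₁ + κtil = 1)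
    (h : ∀ t : ℝ, 0 < t →
      Measure.map (fun p : ℝ × ℝ × ℝ => κ * p.1 + κ₁ * p.2.1 + κtil * p.2.2)
        ((gammaMeasure (a * t) a).prod
          ((gammaMeasure (a₁ * t) a₁).prod (gammaMeasure (atil * t) atil)))
        = gammaMeasure (aj * t) aj) :
    aj = a * (if 0 < κ then 1 else 0) + a₁ * (if 0 < κ₁ then 1 else 0)
        + atil * (if 0 < κtil then 1 else 0) ∧
    (0 < κ → κ * aj = a) ∧ (0 < κ₁ → κ₁ * aj = a₁) ∧ (0 < κtil → κtil * aj = atil) := by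
  let α : Fin 3 → ℝ := ![a, a₁, atil]
  have hα : ∀ i, 0 < α i := by simp [α, Fin.forall_fin_succ, ha, ha₁, hatil]
  have (i : Fin 3) : IsProbabilityMeasure (gammaMeasure (α i) (α i)) :=
    isProbabilityMeasure_gammaMeasure (hα i) (hα i)
  have identities := gamma_decomposition_parameters_general (κ := ![κ, κ₁, κtil]) hα hα haj haj
    ((map_sum_mul_pi_fin_three _ _).trans (by simpa [α] using h 1 one_pos))
  simpa [Finset.sum_filter, Fin.sum_univ_three, Fin.forall_fin_succ, α, hκ.lt_iff_ne',
    hκ₁.lt_iff_ne', hκtil.lt_iff_ne'] using! identities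
end

section
/- For every real p, ∫₀^∞ x^{−3/2} e^{−1/x} Φ(p/√x) dx = (1/√π)·(π/2 + sign(p)·arctan(|p|/√2)), where Φ is the standard normal distribution function and sign(0) = 0. -/
/-!
After the substitution `u = 1/√x` the integral becomes `2 ∫₀^∞ e^{-u²} Φ(pu) du`. Splitting off
`Φ(0) = 1/2` leaves the integral of a Gaussian density over the (signed) plane sector between the
directions `(1, 0)` and `(1, p)`. The substitution `y = su` parametrises this sector by slope, and
integrating over `u` first, by Fubini, leaves the integral of a multiple of `1 / (2 + s²)` from `0`
to `p`, an arctangent.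
-/

open MeasureTheory Real Set

/-- The standard normal distribution function `Φ(u) = (2π)^{-1/2} ∫_{-∞}^u e^{-y²/2} dy`. -/
noncomputable def stdNormalCDF (u : ℝ) : ℝ :=
  (Real.sqrt (2 * Real.pi))⁻¹ * ∫ y in Iic u, Real.exp (-y ^ 2 / 2)

instance isFiniteMeasure_restrict_uIoc (l r : ℝ) :
    IsFiniteMeasure ((volume : Measure ℝ).restrict (uIoc l r)) :=
  isFiniteMeasure_restrict_Ioc _ _

lemma integrable_intervalIntegral_of_integrable_prod {α E : Type*} [MeasurableSpace α]
    {μ : Measure α} [SFinite μ] [NormedAddCommGroup E] [NormedSpace ℝ E] {f : ℝ → α → E} {l r : ℝ}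
    (hf : Integrable (Function.uncurry f) ((volume.restrict (uIoc l r)).prod μ)) :
    Integrable (fun x ↦ ∫ y in l..r, f y x) μ := by
  simp only [intervalIntegral.intervalIntegral_eq_integral_uIoc]
  exact hf.integral_prod_right.smul _

lemma sign_mul_apply_abs_of_odd {f : ℝ → ℝ} (hf : Function.Odd f) (x : ℝ) :
    sign x * f |x| = f x := by
  rcases lt_trichotomy x 0 with hx | rfl | hx
  · rw [sign_of_neg hx, abs_of_neg hx, hf.eq, neg_one_mul, neg_neg]
  · rw [sign_zero, zero_mul, hf.map_zero]
  · rw [sign_of_pos hx, abs_of_pos hx, one_mul]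

lemma integral_Ioi_rpow_smul_comp_inv_sqrt {E : Type*} [NormedAddCommGroup E] [NormedSpace ℝ E]
    (f : ℝ → E) :
    ∫ x in Ioi (0 : ℝ), x ^ (-(3 : ℝ) / 2) • f (√x)⁻¹ = (2 : ℝ) • ∫ u in Ioi 0, f u := by
  rw [← integral_comp_rpow_Ioi f (p := -(1 / 2)) (by norm_num), ← integral_smul]
  refine setIntegral_congr_fun measurableSet_Ioi fun x hx ↦ ?_
  have inv_sqrt_eq : x ^ (-(1 / 2) : ℝ) = (√x)⁻¹ := by
    rw [rpow_neg (le_of_lt hx), sqrt_eq_rpow]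
  have exponent_eq : (-(1 / 2) - 1 : ℝ) = -3 / 2 := by norm_num
  have abs_exponent : |(-(1 / 2) : ℝ)| = 1 / 2 := by norm_num [abs_of_pos]
  simp only [inv_sqrt_eq, exponent_eq, abs_exponent, smul_smul]
  congr 1
  ring

lemma integral_inv_add_mul_sq {a b : ℝ} (ha : 0 < a) (hb : 0 < b) (l r : ℝ) :
    ∫ s in l..r, (a + b * s ^ 2)⁻¹
      = (arctan (r * √(b / a)) - arctan (l * √(b / a))) / √(a * b) := by
  have integrand_eq (s : ℝ) : (a + b * s ^ 2)⁻¹ = b⁻¹ * (√(a / b) ^ 2 + s ^ 2)⁻¹ := by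
    rw [sq_sqrt (by positivity)]
    field_simp
  have const_eq : b⁻¹ * (√(a / b))⁻¹ = (√(a * b))⁻¹ := by
    rw [← mul_inv, sqrt_div' _ hb.le, sqrt_mul ha.le, inv_inj]
    nth_rewrite 1 [← mul_self_sqrt hb.le]
    field_simp
  have div_eq (x : ℝ) : x / √(a / b) = x * √(b / a) := by
    rw [← inv_div b a, sqrt_inv, div_inv_eq_mul]
  simp only [integrand_eq, intervalIntegral.integral_const_mul]
  rw [integral_inv_sq_add_sq (by positivity), div_eq, div_eq, ← mul_assoc, const_eq,
    inv_mul_eq_div]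

section Gaussian

lemma integral_Ioi_mul_exp_neg_mul_sq {b : ℝ} (hb : 0 < b) :
    ∫ u in Ioi (0 : ℝ), u * exp (-b * u ^ 2) = (2 * b)⁻¹ := by
  have complex_integral := integral_mul_cexp_neg_mul_sq (b := b) (by simpa using hb)
  rw [← Complex.ofReal_inj, ← integral_complex_ofReal]
  exact_mod_cast complex_integral

lemma integral_Iic_zero_exp_neg_mul_sq (b : ℝ) :
    ∫ y in Iic (0 : ℝ), exp (-b * y ^ 2) = √(π / b) / 2 := by
  rw [← integral_gaussian_Ioi, ← neg_zero, ← integral_comp_neg_Iic]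
  simp

lemma stdNormalCDF_eq_half_add (x : ℝ) :
    stdNormalCDF x = 1 / 2 + (√(2 * π))⁻¹ * ∫ y in (0 : ℝ)..x, exp (-(1 / 2) * y ^ 2) := by
  have gaussian_integrable := integrable_exp_neg_mul_sq (b := 1 / 2) (by norm_num)
  have integrand_eq (y : ℝ) : -y ^ 2 / 2 = -(1 / 2) * y ^ 2 := by ring
  have variance_eq : π / (1 / 2) = 2 * π := by ring
  have sqrt_two_pi_ne_zero : √(2 * π) ≠ 0 := by positivity
  simp only [stdNormalCDF, integrand_eq]
  rw [← intervalIntegral.integral_Iic_sub_Iic gaussian_integrable.integrableOn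
    gaussian_integrable.integrableOn, integral_Iic_zero_exp_neg_mul_sq, variance_eq]
  field_simp
  ring

variable {a b : ℝ} (p : ℝ)

lemma exp_mul_integral_exp_eq_integral_slope (u : ℝ) :
    exp (-a * u ^ 2) * ∫ y in (0 : ℝ)..p * u, exp (-b * y ^ 2)
      = ∫ s in (0 : ℝ)..p, u * exp (-(a + b * s ^ 2) * u ^ 2) := by
  rw [← zero_mul u, ← intervalIntegral.mul_integral_comp_mul_right, zero_mul,
    ← intervalIntegral.integral_const_mul, ← intervalIntegral.integral_const_mul]
  refine intervalIntegral.integral_congr fun s _ ↦ ?_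
  have exp_eq : exp (-(a + b * s ^ 2) * u ^ 2) = exp (-a * u ^ 2) * exp (-b * (s * u) ^ 2) := by
    rw [← exp_add]
    ring_nf
  simp only [exp_eq]
  ring

lemma integrable_prod_mul_exp_neg_add_mul_sq (ha : 0 < a) (hb : 0 ≤ b)
    (ν : Measure ℝ) [IsFiniteMeasure ν] :
    Integrable (Function.uncurry fun s u : ℝ ↦ u * exp (-(a + b * s ^ 2) * u ^ 2))
      (ν.prod volume) := by
  refine ((integrable_mul_exp_neg_mul_sq ha).comp_snd ν).mono
    (Continuous.aestronglyMeasurable (by fun_prop)) (.of_forall fun ⟨s, u⟩ ↦ ?_)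
  have exponent_le : -(a + b * s ^ 2) * u ^ 2 ≤ -a * u ^ 2 := by
    nlinarith [mul_nonneg hb (mul_nonneg (sq_nonneg s) (sq_nonneg u))]
  simp only [Function.uncurry_apply_pair, norm_mul, norm_of_nonneg (exp_nonneg _)]
  gcongr

lemma integrable_exp_mul_integral_exp (ha : 0 < a) (hb : 0 ≤ b) :
    Integrable fun u : ℝ ↦ exp (-a * u ^ 2) * ∫ y in (0 : ℝ)..p * u, exp (-b * y ^ 2) := by
  simp only [exp_mul_integral_exp_eq_integral_slope]
  exact integrable_intervalIntegral_of_integrable_prod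
    (integrable_prod_mul_exp_neg_add_mul_sq ha hb _)

lemma integral_Ioi_exp_mul_integral_exp (ha : 0 < a) (hb : 0 < b) :
    ∫ u in Ioi (0 : ℝ), exp (-a * u ^ 2) * ∫ y in (0 : ℝ)..p * u, exp (-b * y ^ 2)
      = arctan (p * √(b / a)) / (2 * √(a * b)) := by
  have integrable_slope : Integrable
      (Function.uncurry fun s u : ℝ ↦ u * exp (-(a + b * s ^ 2) * u ^ 2))
      ((volume.restrict (uIoc 0 p)).prod (volume.restrict (Ioi 0))) :=
    (integrable_prod_mul_exp_neg_add_mul_sq ha hb.le _).mono_measure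
      (Measure.prod_mono le_rfl Measure.restrict_le_self)
  calc
    _ = ∫ u in Ioi (0 : ℝ), ∫ s in (0 : ℝ)..p, u * exp (-(a + b * s ^ 2) * u ^ 2) := by
      simp only [exp_mul_integral_exp_eq_integral_slope]
    _ = ∫ s in (0 : ℝ)..p, ∫ u in Ioi (0 : ℝ), u * exp (-(a + b * s ^ 2) * u ^ 2) :=
      (intervalIntegral_integral_swap integrable_slope).symm
    _ = ∫ s in (0 : ℝ)..p, 2⁻¹ * (a + b * s ^ 2)⁻¹ := by
      refine intervalIntegral.integral_congr fun s _ ↦ ?_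
      simp only [integral_Ioi_mul_exp_neg_mul_sq (b := a + b * s ^ 2) (by positivity), mul_inv]
    _ = _ := by
      rw [intervalIntegral.integral_const_mul, integral_inv_add_mul_sq ha hb, zero_mul, arctan_zero]
      ring

end Gaussian

lemma integral_Ioi_exp_neg_mul_sq_mul_stdNormalCDF {a : ℝ} (ha : 0 < a) (p : ℝ) :
    ∫ u in Ioi (0 : ℝ), exp (-a * u ^ 2) * stdNormalCDF (p * u)
      = (√(π * a))⁻¹ * (π / 4 + arctan (p / √(2 * a)) / 2) := by
  have half_pos : (0 : ℝ) < 1 / 2 := by norm_num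
  have integrable_half : Integrable fun u : ℝ ↦ exp (-a * u ^ 2) * (1 / 2) :=
    (integrable_exp_neg_mul_sq ha).mul_const _
  have integrable_sector :=
    (integrable_exp_mul_integral_exp p ha half_pos.le).const_mul (√(2 * π))⁻¹
  have split (u : ℝ) : exp (-a * u ^ 2) * stdNormalCDF (p * u) = exp (-a * u ^ 2) * (1 / 2) +
      (√(2 * π))⁻¹ * (exp (-a * u ^ 2) * ∫ y in (0 : ℝ)..p * u, exp (-(1 / 2) * y ^ 2)) := by
    rw [stdNormalCDF_eq_half_add]
    ring
  have sqrt_ratio : p * √(1 / 2 / a) = p / √(2 * a) := by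
    rw [div_div, one_div, sqrt_inv, div_eq_mul_inv]
  have half_term : √(π / a) / 2 * (1 / 2) = (√(π * a))⁻¹ * (π / 4) := by
    rw [sqrt_div pi_nonneg, sqrt_mul pi_nonneg]
    field_simp
    rw [sq_sqrt pi_nonneg]
    ring
  have sector_const : √(2 * π) * √(a * (1 / 2)) = √(π * a) := by
    rw [← sqrt_mul (by positivity)]
    ring_nf
  simp only [split]
  rw [integral_add integrable_half.integrableOn integrable_sector.integrableOn, integral_mul_const,
    integral_gaussian_Ioi, integral_const_mul, integral_Ioi_exp_mul_integral_exp p ha half_pos,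
    half_term, sqrt_ratio, ← sector_const]
  field_simp

/-- the closed-form evaluation (jmeq): for every real `p`,
`∫₀^∞ x^{-3/2} e^{-1/x} Φ(p/√x) dx = (1/√π)(π/2 + sign(p) arctan(|p|/√2))`. -/
theorem integral_eval_arctan (p : ℝ) :
    ∫ x in Ioi (0 : ℝ), x ^ (-(3 : ℝ) / 2) * Real.exp (-1 / x) * stdNormalCDF (p / Real.sqrt x)
      = (Real.sqrt Real.pi)⁻¹ *
        (Real.pi / 2 + Real.sign p * Real.arctan (|p| / Real.sqrt 2)) := by
  have arctan_odd : Function.Odd fun x : ℝ ↦ arctan (x / √2) := fun x ↦ by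
    simp only [neg_div, arctan_neg]
  calc
    _ = ∫ x in Ioi (0 : ℝ), x ^ (-(3 : ℝ) / 2) *
          (exp (-1 * (√x)⁻¹ ^ 2) * stdNormalCDF (p * (√x)⁻¹)) := by
      refine setIntegral_congr_fun measurableSet_Ioi fun x hx ↦ ?_
      simp only [inv_pow, sq_sqrt (le_of_lt hx), ← div_eq_mul_inv, mul_assoc]
    _ = 2 * ∫ u in Ioi (0 : ℝ), exp (-1 * u ^ 2) * stdNormalCDF (p * u) :=
      integral_Ioi_rpow_smul_comp_inv_sqrt fun u ↦ exp (-1 * u ^ 2) * stdNormalCDF (p * u)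
    _ = (√π)⁻¹ * (π / 2 + arctan (p / √2)) := by
      rw [integral_Ioi_exp_neg_mul_sq_mul_stdNormalCDF one_pos, mul_one, mul_one]
      ring
    _ = _ := by rw [← sign_mul_apply_abs_of_odd arctan_odd p]
end

section
/- Let α > −1, c > 0 and h ∈ ℝ with h² < 2c. Then ∫₀^∞ x^α e^{−cx} Φ(h√x) dx = (Γ(α + 3/2)/(c^{α+1}√(2π))) · [ B(1/2, α + 1)/√2 + (h/√c) · ₂F₁(α + 3/2, 1/2, 3/2; −h²/(2c)) ], where ₂F₁ is the Gauss hypergeometric function (given on |z| < 1 by its power series Σ_{n≥0} ((a)_n(b)_n/(c)_n) zⁿ/n!), Γ is the gamma function and B is the beta function. -/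
open MeasureTheory Real Set

/-- The Gauss hypergeometric function `₂F₁(a, b, c; z)`, given by its power series
`Σₙ (a)ₙ(b)ₙ/(c)ₙ · zⁿ/n!` where `(a)ₙ` is the Pochhammer symbol. -/
noncomputable def hyp2F1 (a b c z : ℝ) : ℝ :=
  ∑' n : ℕ, ((ascPochhammer ℝ n).eval a * (ascPochhammer ℝ n).eval b /
    (ascPochhammer ℝ n).eval c) * z ^ n / n.factorial

/-- The Euler beta function `B(x, y) = Γ(x)Γ(y)/Γ(x+y)`. -/
noncomputable def betaFun (x y : ℝ) : ℝ :=
  Real.Gamma x * Real.Gamma y / Real.Gamma (x + y)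

/-!
Up to the factor `√(2π)`, the odd part `Φ - 1/2` of the normal distribution function is
`∫₀ᵘ e^{-y²/2} dy = u · ₁F₁(1/2; 3/2; -u²/2)`. At `u = h√x` this is `√x` times a power series in
`x`, and integrating termwise against `x^α e^{-cx}` multiplies the `n`-th coefficient by
`Γ(α + 3/2 + n) / c^(α + 3/2 + n)`, that is, it inserts the Pochhammer symbol `(α + 3/2)ₙ` and turns
`₁F₁` into `₂F₁(α + 3/2, 1/2; 3/2; -h²/(2c))`. The even part `1/2` contributes a Gamma integral.
-/

/-- Kummer's confluent hypergeometric function `₁F₁(a; b; z)`, given by its power series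
`Σₙ (a)ₙ/(b)ₙ · zⁿ/n!`. It expresses the odd part of the normal distribution function. As for
`hyp2F1`, terms with `(b)ₙ = 0` are `0`. -/
noncomputable def hyp1F1 (a b z : ℝ) : ℝ :=
  ∑' n : ℕ, (ascPochhammer ℝ n).eval a / (ascPochhammer ℝ n).eval b * z ^ n / n.factorial

lemma gamma_add_natCast {a : ℝ} (ha : ∀ k : ℕ, a ≠ -k) (n : ℕ) :
    Gamma (a + n) = Gamma a * (ascPochhammer ℝ n).eval a := by
  induction n with
  | zero => simp
  | succ n ih =>
    have hn : a + n ≠ 0 := fun h => ha n (eq_neg_of_add_eq_zero_left h)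
    rw [ascPochhammer_succ_eval, Nat.cast_succ, ← add_assoc, Gamma_add_one hn, ih]
    ring

lemma gamma_add_mul_betaFun {x y : ℝ} (hxy : 0 < x + y) :
    Gamma (x + y) * betaFun x y = Gamma x * Gamma y :=
  mul_div_cancel₀ _ (Gamma_pos_of_pos hxy).ne'

lemma mul_ascPochhammer_eval_add_one {R : Type*} [CommSemiring R] (a : R) (n : ℕ) :
    a * (ascPochhammer R n).eval (a + 1) = (ascPochhammer R n).eval a * (a + n) := by
  rw [← ascPochhammer_succ_eval, ascPochhammer_succ_left]
  simp

lemma ascPochhammer_eval_half_div_three_halves (n : ℕ) :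
    (ascPochhammer ℝ n).eval (1 / 2) / (ascPochhammer ℝ n).eval (3 / 2) = 1 / (2 * n + 1) := by
  have hpos : 0 < (ascPochhammer ℝ n).eval (3 / 2 : ℝ) := ascPochhammer_pos n _ (by norm_num)
  have hshift := mul_ascPochhammer_eval_add_one (1 / 2 : ℝ) n
  rw [show (1 / 2 + 1 : ℝ) = 3 / 2 by norm_num] at hshift
  rw [div_eq_div_iff hpos.ne' (by positivity)]
  linarith

lemma one_le_radius_ordinaryHypergeometricSeries {𝕂 : Type*} (𝔸 : Type*) [RCLike 𝕂]
    [NormedDivisionRing 𝔸] [NormedAlgebra 𝕂 𝔸] (a b c : 𝕂) :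
    1 ≤ (ordinaryHypergeometricSeries 𝔸 a b c).radius := by
  by_cases habc : ∀ k : ℕ, (k : 𝕂) ≠ -a ∧ (k : 𝕂) ≠ -b ∧ (k : 𝕂) ≠ -c
  · exact (ordinaryHypergeometricSeries_radius_eq_one 𝔸 a b c habc).ge
  · obtain ⟨k, hk⟩ : ∃ k : ℕ, (k : 𝕂) = -a ∨ (k : 𝕂) = -b ∨ (k : 𝕂) = -c := by
      simpa only [not_forall, not_and_or, not_not] using habc
    have hzero (n : ℕ) : ordinaryHypergeometricSeries 𝔸 a b c (n + (k + 1)) = 0 :=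
      ordinaryHypergeometricSeries_eq_zero_of_neg_nat a b c hk (by lia)
    rw [FormalMultilinearSeries.radius_eq_top_of_forall_image_add_eq_zero _ (k + 1) hzero]
    exact le_top

lemma summable_hyp2F1 (a b c : ℝ) {z : ℝ} (hz : |z| < 1) :
    Summable fun n : ℕ => ((ascPochhammer ℝ n).eval a * (ascPochhammer ℝ n).eval b /
      (ascPochhammer ℝ n).eval c) * z ^ n / n.factorial := by
  have hball : z ∈ Metric.eball 0 (ordinaryHypergeometricSeries ℝ a b c).radius := by
    refine Metric.eball_subset_eball (one_le_radius_ordinaryHypergeometricSeries ℝ a b c) ?_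
    rw [mem_eball_zero_iff, ← ofReal_norm]
    exact ENNReal.ofReal_lt_one.2 hz
  refine ((ordinaryHypergeometricSeries ℝ a b c).summable hball).congr fun n => ?_
  rw [ordinaryHypergeometricSeries_apply_eq, smul_eq_mul]
  ring

lemma integrableOn_rpow_mul_exp_neg_mul {α c : ℝ} (hα : -1 < α) (hc : 0 < c) :
    IntegrableOn (fun x => x ^ α * exp (-c * x)) (Ioi 0) := by
  simpa only [rpow_one] using integrableOn_rpow_mul_exp_neg_mul_rpow hα zero_lt_one hc

lemma integral_rpow_mul_exp_mul_tsum {s c : ℝ} (hs : 0 < s) (hc : 0 < c) {a : ℕ → ℝ}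
    (ha : Summable fun n => a n * ((1 / c) ^ (s + n) * Gamma (s + n))) :
    ∫ x in Ioi 0, x ^ (s - 1) * exp (-(c * x)) * ∑' n, a n * x ^ n =
      ∑' n, a n * ((1 / c) ^ (s + n) * Gamma (s + n)) := by
  let F (n : ℕ) (x : ℝ) : ℝ := a n * (x ^ (s + n - 1) * exp (-(c * x)))
  have hsn (n : ℕ) : 0 < s + n := by positivity
  have hF_integrable (n : ℕ) : IntegrableOn (F n) (Ioi 0) := by
    simpa only [F, IntegrableOn, neg_mul] using
      (integrableOn_rpow_mul_exp_neg_mul (by linarith [hsn n]) hc).const_mul (a n)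
  have hF_norm (n : ℕ) :
      ∫ x in Ioi 0, ‖F n x‖ = ‖a n * ((1 / c) ^ (s + n) * Gamma (s + n))‖ := by
    have hpos : 0 < (1 / c) ^ (s + n) * Gamma (s + n) := by positivity
    rw [norm_mul, norm_of_nonneg hpos.le, ← integral_rpow_mul_exp_neg_mul_Ioi (hsn n) hc,
      ← integral_const_mul]
    refine setIntegral_congr_fun measurableSet_Ioi fun x (hx : 0 < x) => ?_
    rw [norm_mul, norm_of_nonneg (by positivity : 0 ≤ x ^ (s + n - 1) * exp (-(c * x)))]
  have hF_tsum : ∀ x ∈ Ioi (0 : ℝ),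
      x ^ (s - 1) * exp (-(c * x)) * ∑' n, a n * x ^ n = ∑' n, F n x := by
    intro x (hx : 0 < x)
    rw [← tsum_mul_left]
    refine tsum_congr fun n => ?_
    simp only [F]
    rw [add_sub_right_comm, rpow_add_natCast hx.ne']
    ring
  have hF_summable : Summable fun n => ∫ x in Ioi 0, ‖F n x‖ := by
    simpa only [hF_norm] using ha.norm
  rw [setIntegral_congr_fun measurableSet_Ioi hF_tsum,
    ← integral_tsum_of_summable_integral_norm hF_integrable hF_summable]
  refine tsum_congr fun n => ?_
  rw [integral_const_mul, integral_rpow_mul_exp_neg_mul_Ioi (hsn n) hc]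

theorem integral_rpow_mul_exp_mul_hyp1F1 {s c z : ℝ} (hs : 0 < s) (hz : |z| < c) (a b : ℝ) :
    ∫ x in Ioi 0, x ^ (s - 1) * exp (-(c * x)) * hyp1F1 a b (z * x) =
      (1 / c) ^ s * Gamma s * hyp2F1 s a b (z / c) := by
  have hc : 0 < c := (abs_nonneg z).trans_lt hz
  have hzc : |z / c| < 1 := by rwa [abs_div, abs_of_pos hc, div_lt_one hc]
  let k (n : ℕ) : ℝ :=
    (ascPochhammer ℝ n).eval a / (ascPochhammer ℝ n).eval b * z ^ n / n.factorial
  have hseries (x : ℝ) : hyp1F1 a b (z * x) = ∑' n, k n * x ^ n := by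
    refine tsum_congr fun n => ?_
    rw [mul_pow]
    ring
  have hterm (n : ℕ) : k n * ((1 / c) ^ (s + n) * Gamma (s + n)) =
      (1 / c) ^ s * Gamma s * ((ascPochhammer ℝ n).eval s * (ascPochhammer ℝ n).eval a /
        (ascPochhammer ℝ n).eval b * (z / c) ^ n / n.factorial) := by
    have hs_ne (m : ℕ) : s ≠ -m := by linarith [m.cast_nonneg (α := ℝ)]
    rw [gamma_add_natCast hs_ne, rpow_add_natCast (by positivity), div_pow z, one_div c, inv_pow]
    ring
  have hsummable : Summable fun n => k n * ((1 / c) ^ (s + n) * Gamma (s + n)) := by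
    simpa only [hterm] using (summable_hyp2F1 s a b hzc).mul_left _
  simp only [hseries]
  rw [integral_rpow_mul_exp_mul_tsum hs hc hsummable, tsum_congr hterm, tsum_mul_left, hyp2F1]

theorem integral_exp_mul_sq (z u : ℝ) :
    ∫ y in 0..u, exp (z * y ^ 2) = u * hyp1F1 (1 / 2) (3 / 2) (z * u ^ 2) := by
  have hsum : HasSum (fun n : ℕ => ∫ y in 0..u, (z * y ^ 2) ^ n / n.factorial)
      (∫ y in 0..u, exp (z * y ^ 2)) := by
    refine intervalIntegral.hasSum_integral_of_dominated_convergence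
      (fun n _ => (|z| * u ^ 2) ^ n / n.factorial)
      (fun n => (by fun_prop : Continuous _).aestronglyMeasurable)
      (fun n => ae_of_all _ fun y hy => ?_)
      (ae_of_all _ fun _ _ => summable_pow_div_factorial _) intervalIntegrable_const
      (ae_of_all _ fun y _ => ?_)
    · have hyu : y ^ 2 ≤ u ^ 2 := by
        simpa [sq_le_sq] using abs_sub_left_of_mem_uIcc (uIoc_subset_uIcc hy)
      rw [norm_div, norm_pow, norm_mul, norm_natCast, norm_of_nonneg (sq_nonneg y), norm_eq_abs]
      gcongr
    · rw [exp_eq_exp_ℝ]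
      exact NormedSpace.expSeries_div_hasSum_exp _
  rw [← hsum.tsum_eq, hyp1F1, ← tsum_mul_left]
  refine tsum_congr fun n => ?_
  simp only [mul_pow, ← pow_mul]
  rw [intervalIntegral.integral_div, intervalIntegral.integral_const_mul, integral_pow,
    ascPochhammer_eval_half_div_three_halves]
  push_cast
  ring

theorem stdNormalCDF_eq_cdf_gaussianReal (u : ℝ) :
    stdNormalCDF u = ProbabilityTheory.cdf (ProbabilityTheory.gaussianReal 0 1) u := by
  rw [ProbabilityTheory.cdf_eq_real, measureReal_def,
    ProbabilityTheory.gaussianReal_apply_eq_integral 0 one_ne_zero, ENNReal.toReal_ofReal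
      (integral_nonneg (ProbabilityTheory.gaussianPDFReal_nonneg 0 1)), stdNormalCDF]
  simp [ProbabilityTheory.gaussianPDFReal, integral_const_mul]

lemma measurable_stdNormalCDF : Measurable stdNormalCDF := by
  rw [funext stdNormalCDF_eq_cdf_gaussianReal]
  exact (ProbabilityTheory.monotone_cdf _).measurable

lemma norm_stdNormalCDF_le_one (u : ℝ) : ‖stdNormalCDF u‖ ≤ 1 := by
  rw [stdNormalCDF_eq_cdf_gaussianReal, norm_of_nonneg (ProbabilityTheory.cdf_nonneg _ u)]
  exact ProbabilityTheory.cdf_le_one _ u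

lemma stdNormalCDF_sub_half (u : ℝ) :
    stdNormalCDF u - 1 / 2 = u / √(2 * π) * hyp1F1 (1 / 2) (3 / 2) (-(1 / 2) * u ^ 2) := by
  have hexp (y : ℝ) : exp (-y ^ 2 / 2) = exp (-(1 / 2) * y ^ 2) := by ring_nf
  have hintegrable : Integrable fun y : ℝ => exp (-(1 / 2) * y ^ 2) :=
    integrable_exp_neg_mul_sq (by norm_num)
  have hhalf : ∫ y in Iic (0 : ℝ), exp (-(1 / 2) * y ^ 2) = √(2 * π) / 2 := by
    have hneg := integral_comp_neg_Iic 0 fun y : ℝ => exp (-(1 / 2) * y ^ 2)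
    simp only [neg_sq, neg_zero] at hneg
    rw [hneg, integral_gaussian_Ioi, div_div_eq_mul_div, div_one, mul_comm π]
  have hsplit := intervalIntegral.integral_Iic_sub_Iic
    (hintegrable.integrableOn (s := Iic 0)) (hintegrable.integrableOn (s := Iic u))
  rw [hhalf, integral_exp_mul_sq, sub_eq_iff_eq_add] at hsplit
  simp only [stdNormalCDF, hexp]
  rw [hsplit]
  field

lemma integrableOn_rpow_exp_normalCDF {α c : ℝ} (hα : -1 < α) (hc : 0 < c) (h : ℝ) :
    IntegrableOn (fun x => x ^ α * exp (-c * x) * stdNormalCDF (h * √x)) (Ioi 0) :=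
  (integrableOn_rpow_mul_exp_neg_mul hα hc).mul_bdd
    (measurable_stdNormalCDF.comp (by fun_prop)).aestronglyMeasurable
    (ae_of_all _ fun x => norm_stdNormalCDF_le_one _)

lemma integral_rpow_exp_normalCDF_eq_add {α c : ℝ} (hα : -1 < α) (hc : 0 < c) (h : ℝ) :
    ∫ x in Ioi 0, x ^ α * exp (-c * x) * stdNormalCDF (h * √x) =
      (∫ x in Ioi 0, x ^ α * exp (-c * x)) / 2 +
        ∫ x in Ioi 0, x ^ α * exp (-c * x) * (stdNormalCDF (h * √x) - 1 / 2) := by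
  simp only [mul_sub]
  rw [integral_sub (integrableOn_rpow_exp_normalCDF hα hc h)
    ((integrableOn_rpow_mul_exp_neg_mul hα hc).mul_const _), integral_mul_const]
  ring

lemma integral_rpow_exp_eq_betaFun {α c : ℝ} (hα : -1 < α) (hc : 0 < c) :
    (∫ x in Ioi 0, x ^ α * exp (-c * x)) / 2 =
      Gamma (α + 3 / 2) / (c ^ (α + 1) * √(2 * π)) * (betaFun (1 / 2) (α + 1) / √2) := by
  have hgamma := integral_rpow_mul_exp_neg_mul_Ioi (by linarith : 0 < α + 1) hc
  simp only [add_sub_cancel_right, ← neg_mul] at hgamma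
  have hbeta := gamma_add_mul_betaFun (by linarith : 0 < 1 / 2 + (α + 1))
  rw [Gamma_one_half_eq, show 1 / 2 + (α + 1) = α + 3 / 2 by ring] at hbeta
  have hsqrt : √(2 * π) * √2 = 2 * √π := by
    rw [sqrt_mul zero_le_two, mul_right_comm, mul_self_sqrt zero_le_two]
  rw [hgamma, div_rpow zero_le_one hc.le, one_rpow, div_mul_div_comm, hbeta, mul_assoc, hsqrt]
  field

lemma integral_rpow_exp_normalCDF_sub_half {α c h : ℝ} (hα : -(3 / 2) < α) (hh : h ^ 2 < 2 * c) :
    ∫ x in Ioi 0, x ^ α * exp (-c * x) * (stdNormalCDF (h * √x) - 1 / 2) =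
      Gamma (α + 3 / 2) / (c ^ (α + 1) * √(2 * π)) *
        (h / √c * hyp2F1 (α + 3 / 2) (1 / 2) (3 / 2) (-h ^ 2 / (2 * c))) := by
  have hc : 0 < c := by linarith [sq_nonneg h]
  have hz : |-h ^ 2 / 2| < c := by
    rw [neg_div, abs_neg, abs_of_nonneg (by positivity)]
    linarith
  have hpointwise : ∀ x ∈ Ioi (0 : ℝ),
      x ^ α * exp (-c * x) * (stdNormalCDF (h * √x) - 1 / 2) =
        h / √(2 * π) * (x ^ (α + 3 / 2 - 1) * exp (-(c * x)) *
          hyp1F1 (1 / 2) (3 / 2) (-h ^ 2 / 2 * x)) := by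
    intro x (hx : 0 < x)
    have harg : -(1 / 2) * (h * √x) ^ 2 = -h ^ 2 / 2 * x := by
      rw [mul_pow, sq_sqrt hx.le]
      ring
    rw [stdNormalCDF_sub_half, harg, show α + 3 / 2 - 1 = α + 1 / 2 by ring, rpow_add hx,
      ← sqrt_eq_rpow, neg_mul]
    ring
  have hpow : (1 / c) ^ (α + 3 / 2) = 1 / (c ^ (α + 1) * √c) := by
    rw [div_rpow zero_le_one hc.le, one_rpow, show α + 3 / 2 = α + 1 + 1 / 2 by ring,
      rpow_add hc, ← sqrt_eq_rpow]
  rw [setIntegral_congr_fun measurableSet_Ioi hpointwise, integral_const_mul,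
    integral_rpow_mul_exp_mul_hyp1F1 (by linarith) hz, div_div, hpow]
  ring

/-- the integral evaluation (it11): for `α > -1`, `c > 0` and `h² < 2c`,
`∫₀^∞ xᵅ e^{-cx} Φ(h√x) dx
  = Γ(α + 3/2)/(c^{α+1}√(2π)) · (B(1/2, α+1)/√2 + (h/√c) ₂F₁(α + 3/2, 1/2, 3/2; -h²/(2c)))`. -/
theorem integral_rpow_exp_normalCDF (α c h : ℝ) (hα : -1 < α) (hc : 0 < c)
    (hh : h ^ 2 < 2 * c) :
    ∫ x in Ioi (0 : ℝ), x ^ α * Real.exp (-c * x) * stdNormalCDF (h * Real.sqrt x)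
      = Real.Gamma (α + 3 / 2) / (c ^ (α + 1) * Real.sqrt (2 * Real.pi)) *
        (betaFun (1 / 2) (α + 1) / Real.sqrt 2 +
          h / Real.sqrt c * hyp2F1 (α + 3 / 2) (1 / 2) (3 / 2) (-h ^ 2 / (2 * c))) := by
  rw [integral_rpow_exp_normalCDF_eq_add hα hc, integral_rpow_exp_eq_betaFun hα hc,
    integral_rpow_exp_normalCDF_sub_half (by linarith) hh, mul_add]
end
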